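/- Characterization of the 10-monotone cone (Table 1): a vector α ∈ ℝ^7 with components (α_A, α_B, α_V, α_AB, α_AV, α_BV, α_ABV) is 1A-valid and 0B-valid if and only if α is a nonnegative real linear combination of the eight vectors (1,1,0,−1,0,0,0), (0,0,−1,0,0,1,−1), (1,0,−1,0,0,0,0), (0,1,0,0,0,0,−1), (1,1,0,0,0,−1,0), (0,0,−1,1,0,0,−1), (0,0,0,0,1,0,0), (0,0,0,0,−1,0,0). -/

import Mathlib

/-- Strong subadditivity for an entropy function `S` on subsets of the party set `P`:
for pairwise disjoint `X Y Z`, `S(X∪Z) + S(Y∪Z) ≥ S(X∪Y∪Z) + S(Z)`. -/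
def SSAfn {P : Type} [DecidableEq P] (S : Finset P → ℝ) : Prop :=
  ∀ X Y Z : Finset P, Disjoint X Y → Disjoint X Z → Disjoint Y Z →
    S (X ∪ Z) + S (Y ∪ Z) ≥ S (X ∪ Y ∪ Z) + S Z

/-- Weak monotonicity for an entropy function `S` on subsets of the party set `P`:
for pairwise disjoint `X Y Z`, `S(X∪Z) + S(Y∪Z) ≥ S(X) + S(Y)`. -/
def WMfn {P : Type} [DecidableEq P] (S : Finset P → ℝ) : Prop :=
  ∀ X Y Z : Finset P, Disjoint X Y → Disjoint X Z → Disjoint Y Z →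
    S (X ∪ Z) + S (Y ∪ Z) ≥ S X + S Y

/-- `α ∈ ℝ^7` (components ordered `α_A, α_B, α_V, α_AB, α_AV, α_BV, α_ABV`) is 0A-valid:
for every entropy function on the four parties `0 = A1`, `1 = A2`, `2 = B`, `3 = V`
satisfying SSA and WM,
`α_A S_{A2|A1} + α_AB S_{A2|A1B} + α_AV S_{A2|A1V} + α_ABV S_{A2|A1BV} ≥ 0`. -/
def Valid0A (α : Fin 7 → ℝ) : Prop :=
  ∀ S : Finset (Fin 4) → ℝ, S ∅ = 0 → SSAfn S → WMfn S →
    α 0 * (S {0, 1} - S {0}) + α 3 * (S {0, 1, 2} - S {0, 2}) +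
      α 4 * (S {0, 1, 3} - S {0, 3}) + α 6 * (S {0, 1, 2, 3} - S {0, 2, 3}) ≥ 0

/-- `α ∈ ℝ^7` is 1A-valid: for every entropy function on the four parties
`0 = A1`, `1 = A2`, `2 = B`, `3 = V` satisfying SSA and WM,
`α_A S_{A2|A1} + α_AB S_{A2|A1B} − α_BV S_{A2|BV} − α_V S_{A2|V} ≥ 0`. -/
def Valid1A (α : Fin 7 → ℝ) : Prop :=
  ∀ S : Finset (Fin 4) → ℝ, S ∅ = 0 → SSAfn S → WMfn S →
    α 0 * (S {0, 1} - S {0}) + α 3 * (S {0, 1, 2} - S {0, 2}) -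
      α 5 * (S {1, 2, 3} - S {2, 3}) - α 2 * (S {1, 3} - S {3}) ≥ 0

/-- `α ∈ ℝ^7` is 0B-valid: for every entropy function on the four parties
`0 = A`, `1 = B1`, `2 = B2`, `3 = V` satisfying SSA and WM,
`α_B S_{B2|B1} + α_AB S_{B2|B1A} + α_BV S_{B2|B1V} + α_ABV S_{B2|B1AV} ≥ 0`. -/
def Valid0B (α : Fin 7 → ℝ) : Prop :=
  ∀ S : Finset (Fin 4) → ℝ, S ∅ = 0 → SSAfn S → WMfn S →
    α 1 * (S {1, 2} - S {1}) + α 3 * (S {0, 1, 2} - S {0, 1}) +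
      α 5 * (S {1, 2, 3} - S {1, 3}) + α 6 * (S {0, 1, 2, 3} - S {0, 1, 3}) ≥ 0

/-!
By SSA, conditioning `A2` (or `B2`) on more parties lowers its entropy; by WM,
`-S_{A2|X} ≤ S_{A2|Y}` for disjoint `X`, `Y`. Hence the four entropies in the 1A condition, with the
signs they carry there, form a diamond `d ≤ b, c ≤ a`, and so do the four in the 0B condition. A
functional `t a + p b + q c + s d` is nonnegative on all diamonds iff `p⁻ + q⁻ ≤ t` and
`t + p + q + s = 0`, and it suffices to test it on the six diamonds with entries `±1`. Each of these
is realized by an absolutely maximally entangled state on two or four parties, of which one may be a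
purifier outside the given four. The two conditions share `p = α_AB` and `q = α_BV`, and splitting
`α_AB`, `α_BV`, `α_A - α_B` and `α_AV` into positive and negative parts gives the coefficients on
the eight rays.
-/

open Finset

section Diamond

variable {R : Type*} [CommRing R] [LinearOrder R] [IsStrictOrderedRing R] {t p q s : R}

theorem neg_negPart_mul_le_mul {x y : R} (hx : 0 ≤ x) (hxy : x ≤ y) : -(p⁻ * y) ≤ p * x := by
  calc -(p⁻ * y) ≤ -(p⁻ * x) := neg_le_neg (mul_le_mul_of_nonneg_left hxy (negPart_nonneg p))
    _ = -p⁻ * x := (neg_mul _ _).symm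
    _ ≤ p * x := mul_le_mul_of_nonneg_right (neg_le.1 (neg_le_negPart p)) hx

theorem diamond_sum_nonneg {a b c d : R} (ht : p⁻ + q⁻ ≤ t) (hs : t + p + q + s = 0)
    (hba : b ≤ a) (hca : c ≤ a) (hdb : d ≤ b) (hdc : d ≤ c) :
    0 ≤ t * a + p * b + q * c + s * d := by
  have hb : -(p⁻ * (a - d)) ≤ p * (b - d) := neg_negPart_mul_le_mul (by linarith) (by linarith)
  have hc : -(q⁻ * (a - d)) ≤ q * (c - d) := neg_negPart_mul_le_mul (by linarith) (by linarith)
  have ha : (p⁻ + q⁻) * (a - d) ≤ t * (a - d) := mul_le_mul_of_nonneg_right ht (by linarith)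
  calc 0 ≤ t * (a - d) + p * (b - d) + q * (c - d) := by linarith
    _ = t * a + p * b + q * c + s * d := by linear_combination -d * hs

/-- The functional `t a + p b + q c + s d` is nonnegative on the six diamonds `d ≤ b, c ≤ a` with
entries `±1`. A field name lists the signs of `(a, b, c, d)`. -/
structure NonnegOnSignDiamonds (t p q s : R) : Prop where
  pppp : 0 ≤ t + p + q + s
  pppn : 0 ≤ t + p + q - s
  ppnn : 0 ≤ t + p - q - s
  pnpn : 0 ≤ t - p + q - s
  pnnn : 0 ≤ t - p - q - s
  nnnn : 0 ≤ -t - p - q - s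

theorem NonnegOnSignDiamonds.sum_eq_zero (h : NonnegOnSignDiamonds t p q s) :
    t + p + q + s = 0 := by
  linarith [h.pppp, h.nnnn]

theorem NonnegOnSignDiamonds.negPart_add_negPart_le (h : NonnegOnSignDiamonds t p q s) :
    p⁻ + q⁻ ≤ t := by
  have hs : s = -(t + p + q) := by linarith [h.sum_eq_zero]
  obtain ⟨-, hpppn, hppnn, hpnpn, hpnnn, -⟩ := h
  rcases le_total 0 p with hp | hp <;> rcases le_total 0 q with hq | hq <;>
    simp only [hp, hq, negPart_of_nonneg, negPart_of_nonpos] <;> linarith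

end Diamond

section Entropy

variable {P : Type} [DecidableEq P] {S : Finset P → ℝ} {X Y Z : Finset P}

/-- The class of entropy functions over which the validity conditions quantify. -/
structure IsEntropyFn (S : Finset P → ℝ) : Prop where
  empty : S ∅ = 0
  ssa : SSAfn S
  wm : WMfn S

/-- The conditional entropy `S_{X|Y}`, meant for disjoint `X` and `Y`. -/
def condEntropy (S : Finset P → ℝ) (X Y : Finset P) : ℝ := S (X ∪ Y) - S Y

theorem SSAfn.condEntropy_anti (hS : SSAfn S) (hXZ : Disjoint X Z) (hYZ : Y ⊆ Z) :
    condEntropy S X Z ≤ condEntropy S X Y := by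
  have h := hS X (Z \ Y) Y (hXZ.mono_right sdiff_subset) (hXZ.mono_right hYZ) sdiff_disjoint
  rw [union_assoc, sdiff_union_of_subset hYZ] at h
  unfold condEntropy
  linarith

theorem WMfn.neg_condEntropy_le (hS : WMfn S) (hXY : Disjoint X Y) (hXZ : Disjoint X Z)
    (hYZ : Disjoint Y Z) : -condEntropy S X Z ≤ condEntropy S X Y := by
  have h := hS Y Z X hYZ hXY.symm hXZ.symm
  rw [union_comm Y, union_comm Z] at h
  unfold condEntropy
  linarith

/-- The entropy function of an absolutely maximally entangled state on `n` parties, of which those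
in `T` are listed in `P` and the other `n - #T` are not. For `n = 2`, `T = {x}` it is that of one
random bit at `x`. -/
def ameEntropy (n : ℕ) (T X : Finset P) : ℝ := min (#(X ∩ T) : ℝ) (n - #(X ∩ T))

theorem card_union_inter (h : Disjoint X Y) (T : Finset P) :
    #((X ∪ Y) ∩ T) = #(X ∩ T) + #(Y ∩ T) := by
  rw [union_inter_distrib_right,
    card_union_of_disjoint (h.mono inter_subset_left inter_subset_left)]

theorem ssaFn_ameEntropy (n : ℕ) (T : Finset P) : SSAfn (ameEntropy n T) := by
  intro X Y Z hXY hXZ hYZ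
  simp only [ameEntropy, card_union_inter hXZ, card_union_inter hYZ, card_union_inter hXY,
    card_union_inter (disjoint_union_left.2 ⟨hXZ, hYZ⟩), Nat.cast_add]
  -- What remains is concavity of `k ↦ min k (n - k)`.
  grind

theorem wmFn_ameEntropy {n : ℕ} {T : Finset P} (hT : #T ≤ n) : WMfn (ameEntropy n T) := by
  intro X Y Z hXY hXZ hYZ
  have hcard : #((X ∪ Y ∪ Z) ∩ T) ≤ n := (card_le_card inter_subset_right).trans hT
  rw [card_union_inter (disjoint_union_left.2 ⟨hXZ, hYZ⟩), card_union_inter hXY] at hcard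
  have hn : (#(X ∩ T) + #(Y ∩ T) + #(Z ∩ T) : ℝ) ≤ n := mod_cast hcard
  simp only [ameEntropy, card_union_inter hXZ, card_union_inter hYZ, Nat.cast_add]
  grind

theorem isEntropyFn_ameEntropy {n : ℕ} {T : Finset P} (hT : #T ≤ n) :
    IsEntropyFn (ameEntropy n T) where
  empty := by simp [ameEntropy]
  ssa := ssaFn_ameEntropy n T
  wm := wmFn_ameEntropy hT

theorem condEntropy_ameEntropy {m : ℕ} {T : Finset P} {x : P} (hxT : x ∈ T) (hxY : x ∉ Y) :
    condEntropy (ameEntropy (2 * m) T) {x} Y = if #(Y ∩ T) < m then 1 else -1 := by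
  have hx : #({x} ∩ T) = 1 := by simp [hxT]
  simp only [condEntropy, ameEntropy, card_union_inter (disjoint_singleton_left.2 hxY), hx]
  split_ifs with h
  · have h' : (#(Y ∩ T) + 1 : ℝ) ≤ m := mod_cast h
    push_cast
    grind
  · have h' : (m : ℝ) ≤ #(Y ∩ T) := mod_cast not_lt.1 h
    push_cast
    grind

end Entropy

section Validity

variable {α : Fin 7 → ℝ}

theorem valid1A_iff_condEntropy :
    Valid1A α ↔ ∀ S : Finset (Fin 4) → ℝ, IsEntropyFn S →
      0 ≤ α 0 * condEntropy S {1} {0} + α 3 * condEntropy S {1} {0, 2} +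
        α 5 * -condEntropy S {1} {2, 3} + α 2 * -condEntropy S {1} {3} := by
  have h01 : ({1} ∪ {0} : Finset (Fin 4)) = {0, 1} := by decide
  have h012 : ({1} ∪ {0, 2} : Finset (Fin 4)) = {0, 1, 2} := by decide
  have h123 : ({1} ∪ {2, 3} : Finset (Fin 4)) = {1, 2, 3} := by decide
  have h13 : ({1} ∪ {3} : Finset (Fin 4)) = {1, 3} := by decide
  simp only [condEntropy, h01, h012, h123, h13, mul_neg, ← sub_eq_add_neg]
  exact ⟨fun h S hS => h S hS.empty hS.ssa hS.wm, fun h S h0 hs hw => h S ⟨h0, hs, hw⟩⟩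

theorem valid0B_iff_condEntropy :
    Valid0B α ↔ ∀ S : Finset (Fin 4) → ℝ, IsEntropyFn S →
      0 ≤ α 1 * condEntropy S {2} {1} + α 3 * condEntropy S {2} {0, 1} +
        α 5 * condEntropy S {2} {1, 3} + α 6 * condEntropy S {2} {0, 1, 3} := by
  have h12 : ({2} ∪ {1} : Finset (Fin 4)) = {1, 2} := by decide
  have h012 : ({2} ∪ {0, 1} : Finset (Fin 4)) = {0, 1, 2} := by decide
  have h123 : ({2} ∪ {1, 3} : Finset (Fin 4)) = {1, 2, 3} := by decide
  have h0123 : ({2} ∪ {0, 1, 3} : Finset (Fin 4)) = {0, 1, 2, 3} := by decide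
  simp only [condEntropy, h12, h012, h123, h0123]
  exact ⟨fun h S hS => h S hS.empty hS.ssa hS.wm, fun h S h0 hs hw => h S ⟨h0, hs, hw⟩⟩

theorem Valid1A.nonneg_of_ame (hα : Valid1A α) (m : ℕ) (T : Finset (Fin 4)) (h1 : 1 ∈ T)
    (hT : #T ≤ 2 * m) :
    0 ≤ α 0 * (if #({0} ∩ T) < m then 1 else -1) + α 3 * (if #({0, 2} ∩ T) < m then 1 else -1) +
      α 5 * -(if #({2, 3} ∩ T) < m then 1 else -1) +
      α 2 * -(if #({3} ∩ T) < m then 1 else -1) := by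
  simpa [condEntropy_ameEntropy h1] using
    valid1A_iff_condEntropy.1 hα _ (isEntropyFn_ameEntropy hT)

theorem Valid0B.nonneg_of_ame (hα : Valid0B α) (m : ℕ) (T : Finset (Fin 4)) (h2 : 2 ∈ T)
    (hT : #T ≤ 2 * m) :
    0 ≤ α 1 * (if #({1} ∩ T) < m then 1 else -1) + α 3 * (if #({0, 1} ∩ T) < m then 1 else -1) +
      α 5 * (if #({1, 3} ∩ T) < m then 1 else -1) +
      α 6 * (if #({0, 1, 3} ∩ T) < m then 1 else -1) := by
  simpa [condEntropy_ameEntropy h2] using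
    valid0B_iff_condEntropy.1 hα _ (isEntropyFn_ameEntropy hT)

theorem Valid1A.nonnegOnSignDiamonds (hα : Valid1A α) :
    NonnegOnSignDiamonds (α 0) (α 3) (α 5) (α 2) where
  pppp := by simpa +decide [sub_eq_add_neg] using hα.nonneg_of_ame 1 {1, 3}
  pppn := by simpa +decide [sub_eq_add_neg] using hα.nonneg_of_ame 2 {1, 2, 3}
  ppnn := by simpa +decide [sub_eq_add_neg] using hα.nonneg_of_ame 1 {1}
  pnpn := by simpa +decide [sub_eq_add_neg] using hα.nonneg_of_ame 1 {1, 2}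
  pnnn := by simpa +decide [sub_eq_add_neg] using hα.nonneg_of_ame 2 {0, 1, 2}
  nnnn := by simpa +decide [sub_eq_add_neg] using hα.nonneg_of_ame 1 {0, 1}

theorem Valid0B.nonnegOnSignDiamonds (hα : Valid0B α) :
    NonnegOnSignDiamonds (α 1) (α 3) (α 5) (α 6) where
  pppp := by simpa +decide [sub_eq_add_neg] using hα.nonneg_of_ame 1 {2}
  pppn := by simpa +decide [sub_eq_add_neg] using hα.nonneg_of_ame 2 {0, 2, 3}
  ppnn := by simpa +decide [sub_eq_add_neg] using hα.nonneg_of_ame 1 {2, 3}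
  pnpn := by simpa +decide [sub_eq_add_neg] using hα.nonneg_of_ame 1 {0, 2}
  pnnn := by simpa +decide [sub_eq_add_neg] using hα.nonneg_of_ame 2 {0, 1, 2, 3}
  nnnn := by simpa +decide [sub_eq_add_neg] using hα.nonneg_of_ame 1 {1, 2}

theorem valid1A_iff :
    Valid1A α ↔ (α 3)⁻ + (α 5)⁻ ≤ α 0 ∧ α 0 + α 3 + α 5 + α 2 = 0 := by
  refine ⟨fun h => ⟨h.nonnegOnSignDiamonds.negPart_add_negPart_le,
    h.nonnegOnSignDiamonds.sum_eq_zero⟩, fun ⟨hle, hsum⟩ => ?_⟩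
  refine valid1A_iff_condEntropy.2 fun S hS => diamond_sum_nonneg hle hsum ?_ ?_ ?_ ?_
  · exact hS.ssa.condEntropy_anti (by decide) (by decide)
  · exact hS.wm.neg_condEntropy_le (by decide) (by decide) (by decide)
  · exact hS.wm.neg_condEntropy_le (by decide) (by decide) (by decide)
  · exact neg_le_neg (hS.ssa.condEntropy_anti (by decide) (by decide))

theorem valid0B_iff :
    Valid0B α ↔ (α 3)⁻ + (α 5)⁻ ≤ α 1 ∧ α 1 + α 3 + α 5 + α 6 = 0 := by
  refine ⟨fun h => ⟨h.nonnegOnSignDiamonds.negPart_add_negPart_le,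
    h.nonnegOnSignDiamonds.sum_eq_zero⟩, fun ⟨hle, hsum⟩ => ?_⟩
  refine valid0B_iff_condEntropy.2 fun S hS => diamond_sum_nonneg hle hsum ?_ ?_ ?_ ?_ <;>
    exact hS.ssa.condEntropy_anti (by decide) (by decide)

end Validity

section Rays

variable {α : Fin 7 → ℝ}

/-- The rays of Table 1 that generate the 10-monotone cone, in the order
`α_A, α_B, α_V, α_AB, α_AV, α_BV, α_ABV` of components. -/
def cone10Ray : Fin 8 → Fin 7 → ℝ :=
  ![![1, 1, 0, -1, 0, 0, 0], ![0, 0, -1, 0, 0, 1, -1], ![1, 0, -1, 0, 0, 0, 0],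
    ![0, 1, 0, 0, 0, 0, -1], ![1, 1, 0, 0, 0, -1, 0], ![0, 0, -1, 1, 0, 0, -1],
    ![0, 0, 0, 0, 1, 0, 0], ![0, 0, 0, 0, -1, 0, 0]]

theorem sum_smul_cone10Ray (c : Fin 8 → ℝ) :
    ∑ i, c i • cone10Ray i =
      ![c 0 + c 2 + c 4, c 0 + c 3 + c 4, -c 1 - c 2 - c 5, c 5 - c 0, c 6 - c 7, c 1 - c 4,
        -c 1 - c 3 - c 5] := by
  ext i
  fin_cases i <;> simp [cone10Ray, Fin.sum_univ_eight] <;> ring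

theorem negPart_sub_le {R : Type*} [AddCommGroup R] [LinearOrder R] [IsOrderedAddMonoid R] {a b : R}
    (ha : 0 ≤ a) (hb : 0 ≤ b) : (a - b)⁻ ≤ b :=
  sup_le (by simpa using ha) hb

theorem inequalities_of_nonneg_combination {c : Fin 8 → ℝ} (hc : ∀ i, 0 ≤ c i)
    (hα : α = ∑ i, c i • cone10Ray i) :
    ((α 3)⁻ + (α 5)⁻ ≤ α 0 ∧ α 0 + α 3 + α 5 + α 2 = 0) ∧
      (α 3)⁻ + (α 5)⁻ ≤ α 1 ∧ α 1 + α 3 + α 5 + α 6 = 0 := by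
  have h3 : (c 5 - c 0)⁻ ≤ c 0 := negPart_sub_le (hc 5) (hc 0)
  have h5 : (c 1 - c 4)⁻ ≤ c 4 := negPart_sub_le (hc 1) (hc 4)
  rw [sum_smul_cone10Ray] at hα
  subst hα
  refine ⟨⟨?_, ?_⟩, ?_, ?_⟩ <;> simp <;> linarith [hc 2, hc 3]

theorem exists_nonneg_combination
    (hA : (α 3)⁻ + (α 5)⁻ ≤ α 0 ∧ α 0 + α 3 + α 5 + α 2 = 0)
    (hB : (α 3)⁻ + (α 5)⁻ ≤ α 1 ∧ α 1 + α 3 + α 5 + α 6 = 0) :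
    ∃ c : Fin 8 → ℝ, (∀ i, 0 ≤ c i) ∧ α = ∑ i, c i • cone10Ray i := by
  have h3 := posPart_sub_negPart (α 3)
  have h5 := posPart_sub_negPart (α 5)
  have h01 := posPart_sub_negPart (α 0 - α 1)
  -- Rays 0 and 5 add up to a vector with `α_AB = α_BV = 0`, which absorbs the slack `k`.
  obtain ⟨k, hk⟩ : ∃ k, k = α 0 - (α 0 - α 1)⁺ - (α 3)⁻ - (α 5)⁻ := ⟨_, rfl⟩
  have hk0 : 0 ≤ k := by
    have : (α 0 - α 1)⁺ ≤ α 0 - ((α 3)⁻ + (α 5)⁻) := sup_le (by linarith) (by linarith)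
    linarith
  refine ⟨![(α 3)⁻ + k, (α 5)⁺, (α 0 - α 1)⁺, (α 0 - α 1)⁻, (α 5)⁻, (α 3)⁺ + k,
    (α 4)⁺, (α 4)⁻], ?_, ?_⟩
  · simp [Fin.forall_fin_succ, posPart_nonneg, negPart_nonneg, add_nonneg, hk0]
  · rw [sum_smul_cone10Ray]
    ext i
    fin_cases i <;> simp <;> linarith

end Rays

/-- Characterization of the 10-monotone cone: `α` is 1A-valid and 0B-valid iff it is a
nonnegative linear combination of the eight extreme rays of Table 1. -/
theorem cone10_characterization (α : Fin 7 → ℝ) :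
    (Valid1A α ∧ Valid0B α) ↔
      ∃ c : Fin 8 → ℝ, (∀ i, 0 ≤ c i) ∧
        α = ∑ i, c i • (![![1, 1, 0, -1, 0, 0, 0], ![0, 0, -1, 0, 0, 1, -1],
          ![1, 0, -1, 0, 0, 0, 0], ![0, 1, 0, 0, 0, 0, -1], ![1, 1, 0, 0, 0, -1, 0],
          ![0, 0, -1, 1, 0, 0, -1], ![0, 0, 0, 0, 1, 0, 0],
          ![0, 0, 0, 0, -1, 0, 0]] : Fin 8 → Fin 7 → ℝ) i := by
  rw [valid1A_iff, valid0B_iff]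
  exact ⟨fun ⟨hA, hB⟩ => exists_nonneg_combination hA hB,
    fun ⟨_, hc, hα⟩ => inequalities_of_nonneg_combination hc hα⟩
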